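/- Let S² denote the unit sphere {x ∈ ℝ³ : ‖x‖ = 1} in Euclidean 3-space, with the distance induced from ℝ³, and for a point x and a nonempty set A ⊆ ℝ³ let infDist(x, A) denote the infimum of distances from x to points of A. Let D₁, D₂, D₃ be nonempty compact connected subsets of S² such that each of the pairwise intersections D₁ ∩ D₂, D₂ ∩ D₃, D₁ ∩ D₃ is nonempty. Then there exists a point x ∈ S² with infDist(x, D₁) = infDist(x, D₂) = infDist(x, D₃). -/

import Mathlib

/-!
Let `Rᵢ` be the set of points of the sphere at least as close to `Dᵢ` as to the other two sets. The
`Rᵢ` are closed, cover the sphere and meet pairwise, and a common point of all three is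
equidistant. Each `Rᵢ` is connected: the points of the sphere whose nearest point among all the
sets is a given `y` form the trace on the sphere of a convex cone, so they are joined to `y` by
great arcs, and `y` ranges over a connected set.

The common point exists because the sphere is unicoherent: if it is the union of two closed
connected sets, their intersection is connected. Indeed, if `A ∩ B` were a disjoint union of
two nonempty closed sets, then a Urysohn function `t` of this pair would give a continuous map to
the circle, equal to `exp (2πit)` on `A` and to `1` on `B`. On the simply connected sphere it has a
continuous logarithm, which increases by `2π` along `A` but is constant along `B`.
-/

open Set Topology Metric
open scoped RealInnerProductSpace

section CircleLog

variable {X Y : Type*} [TopologicalSpace X] [TopologicalSpace Y]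

/-- A continuous branch on `s` of the angle of the circle-valued map `f`; the angle is measured by
real numbers, without restriction to a fundamental interval. -/
def HasCircleLogOn (f : X → Circle) (s : Set X) : Prop :=
  ∃ φ : X → ℝ, ContinuousOn φ s ∧ ∀ x ∈ s, Circle.exp (φ x) = f x

lemma sub_eq_sub_of_circleExp_eq {s : Set X} (hs : IsPreconnected s) {φ ψ : X → ℝ}
    (hφ : ContinuousOn φ s) (hψ : ContinuousOn ψ s)
    (hexp : ∀ x ∈ s, Circle.exp (φ x) = Circle.exp (ψ x)) {x a : X} (hx : x ∈ s) (ha : a ∈ s) :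
    φ x - ψ x = φ a - ψ a := by
  have hlift : EqOn φ (fun y ↦ ψ y + (φ a - ψ a)) s :=
    Circle.isCoveringMap_exp.eqOn_of_comp_eqOn hs hφ (hψ.add continuousOn_const)
      (fun y hy ↦ by simp [Circle.exp_add, Circle.exp_sub, hexp y hy, hexp a ha]) ha (by ring)
  linarith [hlift hx]

lemma HasCircleLogOn.sub_eq_sub_of_union {f : X → Circle} {A B : Set X}
    (hf : HasCircleLogOn f (A ∪ B)) (hA : IsPreconnected A) (hB : IsPreconnected B) {φ ψ : X → ℝ}
    (hφ : ContinuousOn φ A) (hψ : ContinuousOn ψ B) (hφf : ∀ x ∈ A, f x = Circle.exp (φ x))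
    (hψf : ∀ x ∈ B, f x = Circle.exp (ψ x)) {a b : X} (ha : a ∈ A ∩ B) (hb : b ∈ A ∩ B) :
    φ b - φ a = ψ b - ψ a := by
  obtain ⟨θ, hθ, hθf⟩ := hf
  have hφθ : θ b - φ b = θ a - φ a :=
    sub_eq_sub_of_circleExp_eq hA (hθ.mono subset_union_left) hφ
      (fun x hx ↦ (hθf x (Or.inl hx)).trans (hφf x hx)) hb.1 ha.1
  have hψθ : θ b - ψ b = θ a - ψ a :=
    sub_eq_sub_of_circleExp_eq hB (hθ.mono subset_union_right) hψ
      (fun x hx ↦ (hθf x (Or.inr hx)).trans (hψf x hx)) hb.2 ha.2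
  linarith

lemma HasCircleLogOn.union_of_isOpen {f : X → Circle} {U V : Set X} (hfU : HasCircleLogOn f U)
    (hfV : HasCircleLogOn f V) (hU : IsOpen U) (hV : IsOpen V) (hUV : IsConnected (U ∩ V)) :
    HasCircleLogOn f (U ∪ V) := by
  classical
  obtain ⟨φ, hφ, hφf⟩ := hfU
  obtain ⟨ψ, hψ, hψf⟩ := hfV
  obtain ⟨a, haU, haV⟩ := hUV.nonempty
  have hexp : ∀ x ∈ U ∩ V, Circle.exp (φ x) = Circle.exp (ψ x) := fun x hx ↦
    (hφf x hx.1).trans (hψf x hx.2).symm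
  have hagree : ∀ x ∈ V, U.piecewise φ (fun y ↦ ψ y + (φ a - ψ a)) x = ψ x + (φ a - ψ a) := by
    intro x hxV
    by_cases hxU : x ∈ U
    · rw [piecewise_eq_of_mem _ _ _ hxU]
      linarith [sub_eq_sub_of_circleExp_eq hUV.isPreconnected (hφ.mono inter_subset_left)
        (hψ.mono inter_subset_right) hexp ⟨hxU, hxV⟩ ⟨haU, haV⟩]
    · exact piecewise_eq_of_notMem _ _ _ hxU
  refine ⟨U.piecewise φ fun y ↦ ψ y + (φ a - ψ a), ContinuousOn.union_of_isOpen
    (hφ.congr (piecewise_eqOn _ _ _)) ((hψ.add continuousOn_const).congr hagree) hU hV, ?_⟩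
  rintro x (hxU | hxV)
  · rw [piecewise_eq_of_mem _ _ _ hxU, hφf x hxU]
  · rw [hagree x hxV, Circle.exp_add, Circle.exp_sub, hexp a ⟨haU, haV⟩, div_self', mul_one,
      hψf x hxV]

lemma hasCircleLogOn_source [SimplyConnectedSpace Y]
    [LocallyPathConnectedSpace Y] (e : OpenPartialHomeomorph X Y) (he : e.target = univ)
    {f : X → Circle} (hf : ContinuousOn f e.source) : HasCircleLogOn f e.source := by
  have hfe : Continuous (f ∘ e.symm) := by
    rw [← continuousOn_univ, ← he]
    exact hf.comp e.continuousOn_symm e.mapsTo_symm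
  obtain ⟨y⟩ : Nonempty Y := inferInstance
  obtain ⟨θ, hθ⟩ := Circle.exp_surjective (f (e.symm y))
  obtain ⟨G, ⟨-, hG⟩, -⟩ :=
    Circle.isCoveringMap_exp.existsUnique_continuousMap_lifts ⟨_, hfe⟩ y θ hθ
  refine ⟨G ∘ e, G.continuous.comp_continuousOn e.continuousOn, fun x hx ↦ ?_⟩
  calc Circle.exp (G (e x)) = f (e.symm (e x)) := congrFun hG (e x)
    _ = f x := by rw [e.left_inv hx]

end CircleLog

section Unicoherence

/-- Unicoherence: two closed connected sets covering the space have a connected intersection.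
Connectedness of the space itself, which some authors include, is not required here. -/
def IsUnicoherent (X : Type*) [TopologicalSpace X] : Prop :=
  ∀ ⦃A B : Set X⦄, IsClosed A → IsClosed B → IsPreconnected A → IsPreconnected B →
    A ∪ B = univ → IsPreconnected (A ∩ B)

variable {X : Type*} [TopologicalSpace X]

lemma isUnicoherent_of_hasCircleLogOn_univ [NormalSpace X]
    (hlog : ∀ f : X → Circle, Continuous f → HasCircleLogOn f univ) : IsUnicoherent X := by
  classical
  intro A B hA hB hAconn hBconn hAB
  refine isPreconnected_closed_iff.2 fun H K hH hK hsub ⟨a, ha, haH⟩ ⟨b, hb, hbK⟩ ↦ ?_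
  by_contra hempty
  have hdisj : Disjoint (A ∩ B ∩ H) (A ∩ B ∩ K) := by
    rw [disjoint_iff_inter_eq_empty, ← inter_inter_distrib_left]
    exact not_nonempty_iff_eq_empty.1 hempty
  obtain ⟨t, ht0, ht1, -⟩ := exists_continuous_zero_one_of_isClosed
    ((hA.inter hB).inter hH) ((hA.inter hB).inter hK) hdisj
  have hexp_one : ∀ x ∈ A ∩ B, Circle.exp (2 * Real.pi * t x) = 1 := by
    intro x hx
    rcases hsub hx with hxH | hxK
    · simp [ht0 ⟨hx, hxH⟩]
    · simp [ht1 ⟨hx, hxK⟩]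
  let g : X → Circle := A.piecewise (fun x ↦ Circle.exp (2 * Real.pi * t x)) 1
  have hfrontier : frontier A ⊆ A ∩ B := by
    rw [frontier_eq_closure_inter_closure, hA.closure_eq]
    exact inter_subset_inter_right A
      (closure_minimal (compl_subset_iff_union.2 hAB) hB)
  have hg : Continuous g :=
    Continuous.piecewise (fun x hx ↦ hexp_one x (hfrontier hx)) (by fun_prop) continuous_one
  have hgB : ∀ x ∈ B, g x = 1 := by
    intro x hxB
    by_cases hxA : x ∈ A
    · exact (piecewise_eq_of_mem _ _ _ hxA).trans (hexp_one x ⟨hxA, hxB⟩)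
    · exact piecewise_eq_of_notMem _ _ _ hxA
  have hincrease : 2 * Real.pi * t b - 2 * Real.pi * t a = 0 - 0 :=
    (hAB ▸ hlog g hg : HasCircleLogOn g (A ∪ B)).sub_eq_sub_of_union hAconn hBconn (by fun_prop)
      continuousOn_const (piecewise_eqOn _ _ _) (by simpa using hgB) ha hb
  rw [ht0 ⟨ha, haH⟩, ht1 ⟨hb, hbK⟩, Pi.zero_apply, Pi.one_apply] at hincrease
  linarith [Real.pi_pos]

lemma IsUnicoherent.iInter_nonempty (hX : IsUnicoherent X) {A : Fin 3 → Set X}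
    (hclosed : ∀ i, IsClosed (A i)) (hconn : ∀ i, IsPreconnected (A i))
    (hcover : ⋃ i, A i = univ) (hmeet : ∀ i j, (A i ∩ A j).Nonempty) :
    (⋂ i, A i).Nonempty := by
  have hconn₀₁ : IsPreconnected (A 0 ∪ A 1) := (hconn 0).union' (hmeet 0 1) (hconn 1)
  have hcover' : A 0 ∪ A 1 ∪ A 2 = univ := by
    rw [← hcover]
    ext x
    simp [Fin.exists_fin_succ, or_assoc]
  have hinter : IsPreconnected ((A 0 ∪ A 1) ∩ A 2) :=
    hX ((hclosed 0).union (hclosed 1)) (hclosed 2) hconn₀₁ (hconn 2) hcover'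
  obtain ⟨p, hp₀, hp₂⟩ := hmeet 0 2
  obtain ⟨q, hq₁, hq₂⟩ := hmeet 1 2
  obtain ⟨x, ⟨-, hx₂⟩, hx₀, hx₁⟩ := isPreconnected_closed_iff.1 hinter (A 0) (A 1) (hclosed 0)
    (hclosed 1) inter_subset_left ⟨p, ⟨Or.inl hp₀, hp₂⟩, hp₀⟩ ⟨q, ⟨Or.inr hq₁, hq₂⟩, hq₁⟩
  exact ⟨x, mem_iInter.2 <| Fin.forall_fin_succ.2 ⟨hx₀, Fin.forall_fin_two.2 ⟨hx₁, hx₂⟩⟩⟩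

end Unicoherence

section Voronoi

variable {ι α : Type*} [PseudoMetricSpace α]

/-- The points at least as close to `D i` as to every other member of the family `D`. -/
def voronoiCell (D : ι → Set α) (i : ι) : Set α :=
  {x | ∀ j, infDist x (D i) ≤ infDist x (D j)}

lemma isClosed_voronoiCell (D : ι → Set α) (i : ι) : IsClosed (voronoiCell D i) := by
  rw [voronoiCell, ofPred_forall]
  exact isClosed_iInter fun j ↦ isClosed_le (continuous_infDist_pt _) (continuous_infDist_pt _)

lemma subset_voronoiCell (D : ι → Set α) (i : ι) : D i ⊆ voronoiCell D i := fun x hx j ↦ by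
  rw [infDist_zero_of_mem hx]
  exact infDist_nonneg

lemma iUnion_voronoiCell [Finite ι] [Nonempty ι] (D : ι → Set α) :
    ⋃ i, voronoiCell D i = univ :=
  eq_univ_of_forall fun x ↦ mem_iUnion.2 (Finite.exists_min fun i ↦ infDist x (D i))

lemma infDist_eq_of_mem_iInter_voronoiCell {D : ι → Set α} {x : α}
    (hx : x ∈ ⋂ i, voronoiCell D i) (i j : ι) : infDist x (D i) = infDist x (D j) :=
  le_antisymm (mem_iInter.1 hx i j) (mem_iInter.1 hx j i)

lemma voronoiCell_closure (D : ι → Set α) :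
    voronoiCell (fun i ↦ closure (D i)) = voronoiCell D := by
  funext i
  simp only [voronoiCell, infDist_closure]

end Voronoi

section Sphere

variable {E : Type*} [NormedAddCommGroup E] [InnerProductSpace ℝ E]

lemma one_lt_rank_orthogonal_span_singleton (hE : 2 < Module.rank ℝ E) (v : E) :
    1 < Module.rank ℝ (ℝ ∙ v)ᗮ := by
  by_contra! hle
  refine hE.not_ge ?_
  calc Module.rank ℝ E = Module.rank ℝ ↥((ℝ ∙ v) ⊔ (ℝ ∙ v)ᗮ) := by
        rw [Submodule.sup_orthogonal_of_hasOrthogonalProjection, rank_top]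
    _ ≤ Module.rank ℝ (ℝ ∙ v) + Module.rank ℝ (ℝ ∙ v)ᗮ := Submodule.rank_add_le_rank_add_rank _ _
    _ ≤ 1 + 1 := add_le_add ((rank_span_le _).trans (by simp)) hle
    _ = 2 := one_add_one_eq_two

lemma hasCircleLogOn_compl_singleton_sphere {f : sphere (0 : E) 1 → Circle} (hf : Continuous f)
    (v : sphere (0 : E) 1) : HasCircleLogOn f {v}ᶜ := by
  have hv : ‖(v : E)‖ = 1 := norm_eq_of_mem_sphere v
  rw [← stereographic_source hv]
  exact hasCircleLogOn_source (stereographic hv) (stereographic_target hv) hf.continuousOn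

lemma isConnected_compl_singleton_inter_compl_neg_singleton_sphere (hE : 2 < Module.rank ℝ E)
    (v : sphere (0 : E) 1) : IsConnected ({v}ᶜ ∩ {-v}ᶜ : Set (sphere (0 : E) 1)) := by
  have hv : ‖(v : E)‖ = 1 := norm_eq_of_mem_sphere v
  have hemb := isOpenEmbedding_stereographic_symm hv
  have hzero : (stereographic hv).symm 0 = -v := by
    rw [← stereographic_apply_neg v]
    refine (stereographic hv).left_inv ?_
    rw [stereographic_source]
    exact (ne_neg_of_mem_unit_sphere ℝ v).symm
  have himage : (stereographic hv).symm '' {0}ᶜ = {v}ᶜ ∩ {-v}ᶜ := by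
    rw [image_compl_eq_range_sdiff_image hemb.injective, range_stereographic_symm hv v.2,
      image_singleton, hzero, sdiff_eq]
  rw [← himage]
  exact (isConnected_compl_singleton_of_one_lt_rank
    (one_lt_rank_orthogonal_span_singleton hE _) 0).image _ hemb.continuous.continuousOn

lemma hasCircleLogOn_univ_sphere (hE : 2 < Module.rank ℝ E) {f : sphere (0 : E) 1 → Circle}
    (hf : Continuous f) : HasCircleLogOn f univ := by
  have : Nontrivial E := rank_pos_iff_nontrivial.1 (zero_lt_two.trans hE)
  obtain ⟨v⟩ : Nonempty (sphere (0 : E) 1) := (NormedSpace.sphere_nonempty.2 zero_le_one).to_subtype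
  have hne : v ∉ ({-v} : Set (sphere (0 : E) 1)) := ne_neg_of_mem_unit_sphere ℝ v
  have hcover : ({v}ᶜ ∪ {-v}ᶜ : Set (sphere (0 : E) 1)) = univ := by
    rw [← compl_inter, singleton_inter_eq_empty.2 hne, compl_empty]
  rw [← hcover]
  exact (hasCircleLogOn_compl_singleton_sphere hf v).union_of_isOpen
    (hasCircleLogOn_compl_singleton_sphere hf (-v)) isOpen_compl_singleton isOpen_compl_singleton
    (isConnected_compl_singleton_inter_compl_neg_singleton_sphere hE v)

lemma isUnicoherent_sphere (hE : 2 < Module.rank ℝ E) : IsUnicoherent (sphere (0 : E) 1) :=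
  isUnicoherent_of_hasCircleLogOn_univ fun _ ↦ hasCircleLogOn_univ_sphere hE

end Sphere

section SphericalVoronoi

lemma isPreconnected_pointedCone_inter_sphere {E : Type*} [NormedAddCommGroup E] [NormedSpace ℝ E]
    {C : PointedCone ℝ E} {y : E} (hy : y ∈ C) (hneg : -y ∉ C) :
    IsPreconnected ((C : Set E) ∩ sphere 0 1) := by
  have hy0 : y ≠ 0 := by
    rintro rfl
    exact hneg (by simp)
  have hstar : StarConvex ℝ y ((C : Set E) \ {0}) := by
    rintro z ⟨hzC, hz0⟩ a b ha hb hab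
    refine ⟨C.convex hy hzC ha hb hab, fun hzero ↦ ?_⟩
    rcases ha.eq_or_lt with rfl | ha
    · simp_all
    · refine hneg ((C.smul_mem_iff ha).1 ?_)
      rw [smul_neg, neg_eq_of_add_eq_zero_right hzero]
      exact C.smul_mem hb hzC
  have himage : NormedSpace.normalize '' ((C : Set E) \ {0}) = (C : Set E) ∩ sphere 0 1 := by
    ext x
    constructor
    · rintro ⟨z, ⟨hzC, hz0⟩, rfl⟩
      exact ⟨C.smul_mem (inv_nonneg.2 (norm_nonneg z)) hzC,
        mem_sphere_zero_iff_norm.2 (NormedSpace.norm_normalize hz0)⟩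
    · rintro ⟨hxC, hx⟩
      exact ⟨x, ⟨hxC, ne_zero_of_mem_unit_sphere ⟨x, hx⟩⟩,
        NormedSpace.normalize_eq_self_of_norm_eq_one (mem_sphere_zero_iff_norm.1 hx)⟩
  have hcont : ContinuousOn (NormedSpace.normalize : E → E) ((C : Set E) \ {0}) :=
    (continuous_norm.continuousOn.inv₀ fun _ hz ↦ norm_ne_zero_iff.2 hz.2).smul continuousOn_id
  rw [← himage]
  exact (hstar.isPathConnected ⟨hy, hy0⟩).isConnected.isPreconnected.image _ hcont

variable {ι E : Type*} [NormedAddCommGroup E] [InnerProductSpace ℝ E]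

lemma dist_le_dist_iff_inner_sub_nonneg {y w : E} (hyw : ‖y‖ = ‖w‖) (x : E) :
    dist x y ≤ dist x w ↔ 0 ≤ ⟪y - w, x⟫ := by
  rw [dist_eq_norm, dist_eq_norm, ← sq_le_sq₀ (norm_nonneg _) (norm_nonneg _), norm_sub_sq_real,
    norm_sub_sq_real, hyw, inner_sub_left, real_inner_comm x y, real_inner_comm x w]
  constructor <;> intro h <;> linarith

lemma isPreconnected_setOf_dist_le_inter_sphere (hE : 1 < Module.rank ℝ E) {y : E} {K : Set E}
    (hy : y ∈ sphere (0 : E) 1) (hK : K ⊆ sphere 0 1) :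
    IsPreconnected ({x | ∀ w ∈ K, dist x y ≤ dist x w} ∩ sphere 0 1) := by
  have hnorm_y : ‖y‖ = 1 := mem_sphere_zero_iff_norm.1 hy
  have hnorm : ∀ w ∈ K, ‖w‖ = 1 := fun w hw ↦ mem_sphere_zero_iff_norm.1 (hK hw)
  let C : PointedCone ℝ E := PointedCone.dual (innerₗ E) ((y - ·) '' K)
  have hmem : ∀ x, x ∈ C ↔ ∀ w ∈ K, dist x y ≤ dist x w := by
    intro x
    rw [PointedCone.mem_dual, forall_mem_image]
    exact forall₂_congr fun w hw ↦
      (dist_le_dist_iff_inner_sub_nonneg (hnorm_y.trans (hnorm w hw).symm) x).symm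
  by_cases hneg : -y ∈ C
  · have hall : ∀ w ∈ K, w = y := by
      intro w hw
      have hone_le : 1 ≤ ⟪w, y⟫ := by
        have hinner : 0 ≤ ⟪y - w, -y⟫ :=
          PointedCone.mem_dual.1 hneg (mem_image_of_mem (y - ·) hw)
        rw [inner_neg_right, inner_sub_left, real_inner_self_eq_norm_sq, hnorm_y] at hinner
        linarith
      have hle_one : ⟪w, y⟫ ≤ 1 := by
        simpa [hnorm w hw, hnorm_y] using real_inner_le_norm w y
      exact (inner_eq_one_iff_of_norm_eq_one (hnorm w hw) hnorm_y).1 (hle_one.antisymm hone_le)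
    have huniv : {x | ∀ w ∈ K, dist x y ≤ dist x w} = univ :=
      eq_univ_of_forall fun x w hw ↦ by rw [hall w hw]
    rw [huniv, univ_inter]
    exact isPreconnected_sphere hE 0 1
  · have hyC : y ∈ C := (hmem y).2 fun w _ ↦ by simp
    have hC : (C : Set E) = {x | ∀ w ∈ K, dist x y ≤ dist x w} := ext hmem
    rw [← hC]
    exact isPreconnected_pointedCone_inter_sphere hyC hneg

lemma isPreconnected_voronoiCell_inter_sphere (hE : 1 < Module.rank ℝ E) {D : ι → Set E}
    (hD : ∀ j, D j ⊆ sphere 0 1) (hne : ∀ j, (D j).Nonempty) {i : ι} (hcpt : IsCompact (D i))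
    (hconn : IsPreconnected (D i)) : IsPreconnected (voronoiCell D i ∩ sphere 0 1) := by
  obtain ⟨d, hd⟩ := hne i
  refine isPreconnected_of_forall d fun x ⟨hxcell, hx⟩ ↦ ?_
  obtain ⟨y, hy, hxy⟩ := hcpt.exists_infDist_eq_dist (hne i) x
  let P : Set E := {z | ∀ w ∈ ⋃ j, D j, dist z y ≤ dist z w} ∩ sphere 0 1
  have hP : IsPreconnected P :=
    isPreconnected_setOf_dist_le_inter_sphere hE (hD i hy) (iUnion_subset hD)
  have hyP : y ∈ P := ⟨fun w _ ↦ by simp, hD i hy⟩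
  have hxP : x ∈ P := by
    refine ⟨fun w hw ↦ ?_, hx⟩
    obtain ⟨j, hwj⟩ := mem_iUnion.1 hw
    exact hxy.symm.trans_le ((hxcell j).trans (infDist_le_dist_of_mem hwj))
  have hPcell : P ⊆ voronoiCell D i ∩ sphere 0 1 := fun z ⟨hzP, hz⟩ ↦ ⟨fun j ↦
    (infDist_le_dist_of_mem hy).trans <|
      (le_infDist (hne j)).2 fun {w} hw ↦ hzP w (mem_iUnion_of_mem j hw), hz⟩
  exact ⟨D i ∪ P, union_subset (subset_inter (subset_voronoiCell D i) (hD i)) hPcell, Or.inl hd,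
    Or.inr hxP, hconn.union y hy hyP hP⟩

end SphericalVoronoi

theorem stmt_7_general {E : Type*} [NormedAddCommGroup E] [InnerProductSpace ℝ E]
    (hE : 2 < Module.rank ℝ E) {D : Fin 3 → Set E} (hD : ∀ i, D i ⊆ sphere 0 1)
    (hcpt : ∀ i, IsCompact (closure (D i))) (hconn : ∀ i, IsPreconnected (D i))
    (hmeet : ∀ i j, (D i ∩ D j).Nonempty) :
    ∃ x ∈ sphere (0 : E) 1, ∀ i j, infDist x (D i) = infDist x (D j) := by
  let R : Fin 3 → Set (sphere (0 : E) 1) := fun i ↦ Subtype.val ⁻¹' voronoiCell D i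
  have hclosed : ∀ i, IsClosed (R i) := fun i ↦
    (isClosed_voronoiCell D i).preimage continuous_subtype_val
  have hcell : ∀ i, IsPreconnected (voronoiCell D i ∩ sphere 0 1) := fun i ↦ by
    rw [← voronoiCell_closure]
    exact isPreconnected_voronoiCell_inter_sphere (Nat.one_lt_ofNat.trans hE)
      (fun j ↦ closure_minimal (hD j) isClosed_sphere)
      (fun j ↦ (hmeet j j).left.closure) (hcpt i) (hconn i).closure
  have hRconn : ∀ i, IsPreconnected (R i) := fun i ↦ by
    rw [← IsInducing.subtypeVal.isPreconnected_image, Subtype.image_preimage_coe, inter_comm]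
    exact hcell i
  have hcover : ⋃ i, R i = univ := by
    rw [← preimage_iUnion, iUnion_voronoiCell, preimage_univ]
  have hRmeet : ∀ i j, (R i ∩ R j).Nonempty := fun i j ↦ by
    obtain ⟨p, hpi, hpj⟩ := hmeet i j
    exact ⟨⟨p, hD i hpi⟩, subset_voronoiCell D i hpi, subset_voronoiCell D j hpj⟩
  obtain ⟨x, hx⟩ := (isUnicoherent_sphere hE).iInter_nonempty hclosed hRconn hcover hRmeet
  rw [← preimage_iInter] at hx
  exact ⟨x, x.2, infDist_eq_of_mem_iInter_voronoiCell hx⟩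

/-- The geometric–topological core of the proof of the paper's Lemma 6.1:
for three nonempty compact connected subsets `D₁, D₂, D₃` of `S² ⊆ ℝ³` that
pairwise intersect, there is a point of the sphere equidistant (as distance to
a set) from the three of them. -/
theorem stmt_7 (D₁ D₂ D₃ : Set (EuclideanSpace ℝ (Fin 3)))
    (hs₁ : D₁ ⊆ Metric.sphere 0 1) (hs₂ : D₂ ⊆ Metric.sphere 0 1)
    (hs₃ : D₃ ⊆ Metric.sphere 0 1)
    (hne₁ : D₁.Nonempty) (hne₂ : D₂.Nonempty) (hne₃ : D₃.Nonempty)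
    (hcpt₁ : IsCompact D₁) (hcpt₂ : IsCompact D₂) (hcpt₃ : IsCompact D₃)
    (hconn₁ : IsConnected D₁) (hconn₂ : IsConnected D₂) (hconn₃ : IsConnected D₃)
    (h₁₂ : (D₁ ∩ D₂).Nonempty) (h₂₃ : (D₂ ∩ D₃).Nonempty)
    (h₁₃ : (D₁ ∩ D₃).Nonempty) :
    ∃ x ∈ Metric.sphere (0 : EuclideanSpace ℝ (Fin 3)) 1,
      Metric.infDist x D₁ = Metric.infDist x D₂ ∧
        Metric.infDist x D₂ = Metric.infDist x D₃ := by
  obtain ⟨x, hx, heq⟩ := stmt_7_general (D := ![D₁, D₂, D₃])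
    (by norm_num [← Module.finrank_eq_rank])
    (by simp [Fin.forall_fin_succ, *]) (by simp [Fin.forall_fin_succ, IsCompact.closure, *])
    (by simp [Fin.forall_fin_succ, IsConnected.isPreconnected, *])
    (by simp [Fin.forall_fin_succ, inter_comm D₂ D₁, inter_comm D₃, *])
  exact ⟨x, hx, heq 0 1, heq 1 2⟩
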